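/- Let F : S → G(S) be a Markov chain on a measurable space S, let p : S → {1,…,d} be a measurable priority function, and let I ⊆ {1,…,d}. Suppose there exists a measurable function r : S → [0,∞)^d such that for each x ∈ S, r(x) ⪰_{p(x)} (X r)(x) if p(x) ∈ I, and r(x) ≻_{p(x)} (X r)(x) if p(x) ∉ I. Then for every initial state x₀ ∈ S, ℙ_{x₀}[Parity(p, I)] = 1, where Parity(p, I) is the set of traces whose minimum infinitely-occurring priority lies in I. -/

import Mathlib

open MeasureTheory ProbabilityTheory Set
open scoped ENNReal NNReal

variable {S : Type*} [MeasurableSpace S]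

/-- Prepend an initial state to a trace. -/
def prep (s₀ : S) (ω : ℕ → S) : ℕ → S := fun n => Nat.rec s₀ (fun k _ => ω k) n

/-- The generalised parity condition for a priority function `p` and a set `I` of
priorities: the minimum priority occurring infinitely often lies in `I`. -/
def parityEventIn (p : S → ℕ) (I : Set ℕ) : Set (ℕ → S) :=
  {ω | sInf {q : ℕ | {i : ℕ | p (ω i) = q}.Infinite} ∈ I}

/-- The truncated strict lexicographic supermartingale ordering on `[0,∞]^d`,
comparing only the first `k` components. -/
def lexGTTrunc {d : ℕ} (k : ℕ) (r r' : Fin d → ℝ≥0∞) : Prop :=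
  ∃ l : Fin d, (l : ℕ) < k ∧ (∀ i < l, r' i ≤ r i) ∧ r' l + 1 ≤ r l

/-- The truncated non-strict lexicographic supermartingale ordering on `[0,∞]^d`,
comparing only the first `k` components. -/
def lexGETrunc {d : ℕ} (k : ℕ) (r r' : Fin d → ℝ≥0∞) : Prop :=
  lexGTTrunc k r r' ∨ ∀ i : Fin d, (i : ℕ) < k → r' i ≤ r i

/-- The next-time operator applied componentwise: `(𝕏 r)(s) = ∫ r dF(s)`. -/
noncomputable def nextTimeV (F : Kernel S S) {n : ℕ} (r : S → Fin n → ℝ≥0∞) :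
    S → Fin n → ℝ≥0∞ :=
  fun s i => ∫⁻ y, r y i ∂(F s)

/-!
The trace measures satisfy a one-step recursion, and unfolding it shows that the expected decrease
of a function `f : S → [0, ∞)` accumulated before leaving the region where `f` decreases in
expectation is at most `f` of the initial state. Hence almost surely, if `f` eventually never
increases in expectation along the trace, then its expected decreases are summable, so only finitely
many of them are at least `1`.

Fix a trace with this property for every component of `r`, and let `q` be its minimum priority
occurring infinitely often. From some point on `r` is `⪰_q`-decreasing, so going through
the components `0, 1, …, q - 1` in turn, each one eventually never increases and never drops by `1`:
a strict decrease can then no longer be witnessed at an earlier component. Thus `≻_q` holds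
only finitely often, and this excludes `q ∉ I`.
-/

open Filter
open scoped Topology

section Trace

lemma measurable_uncurry_prep : Measurable (Function.uncurry (prep (S := S))) := by
  refine measurable_pi_lambda _ fun n => ?_
  cases n with
  | zero => exact measurable_fst
  | succ k => exact (measurable_pi_apply k).comp measurable_snd

lemma measurable_prep (s : S) : Measurable (prep s) :=
  measurable_uncurry_prep.of_uncurry_left

lemma measurable_map_prep (P : Kernel S (ℕ → S)) [IsSFiniteKernel P] :
    Measurable fun s => (P s).map (prep s) := by
  have map_prep_eq (s : S) :
      (P s).map (prep s) = (Kernel.id ×ₖ P).map (Function.uncurry prep) s := by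
    rw [Kernel.map_apply _ measurable_uncurry_prep, Kernel.prod_apply, Kernel.id_apply,
      Measure.dirac_prod, Measure.map_map measurable_uncurry_prep measurable_prodMk_left]
    rfl
  simp_rw [map_prep_eq]
  exact Kernel.measurable _

lemma measurable_tail (N : ℕ) : Measurable fun (ω : ℕ → S) n => ω (n + N) :=
  measurable_pi_lambda _ fun n => measurable_pi_apply (n + N)

/-- `P` is the kernel of trace measures of the Markov chain `F`, characterised by its one-step
unfolding. A trace drawn from `P s₀` begins with the first successor of `s₀`, so `s₀` itself is not
recorded. -/
def IsTraceKernel (F : Kernel S S) (P : Kernel S (ℕ → S)) : Prop :=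
  ∀ s₀ : S, P s₀ = (F s₀).bind fun s₁ => (P s₁).map (prep s₁)

namespace IsTraceKernel

variable {F : Kernel S S} {P : Kernel S (ℕ → S)} [IsSFiniteKernel P]

lemma lintegral_eq (hP : IsTraceKernel F P) {g : (ℕ → S) → ℝ≥0∞} (hg : Measurable g) (x : S) :
    ∫⁻ ω, g ω ∂P x = ∫⁻ s, ∫⁻ ω, g (prep s ω) ∂P s ∂F x := by
  rw [hP x, Measure.lintegral_bind (measurable_map_prep P).aemeasurable hg.aemeasurable]
  exact lintegral_congr fun s => lintegral_map hg (measurable_prep s)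

lemma ae_mem_of_forall_ae_prep_mem (hP : IsTraceKernel F P) {E : Set (ℕ → S)}
    (hE : MeasurableSet E) (hprep : ∀ s, ∀ᵐ ω ∂P s, prep s ω ∈ E) (x : S) :
    ∀ᵐ ω ∂P x, ω ∈ E := by
  rw [hP x, ae_iff, ← compl_def,
    Measure.bind_apply hE.compl (measurable_map_prep P).aemeasurable]
  refine (lintegral_congr fun s => ?_).trans lintegral_zero
  rw [Measure.map_apply (measurable_prep s) hE.compl]
  exact hprep s

lemma ae_forall_tail_mem (hP : IsTraceKernel F P) {E : Set (ℕ → S)} (hE : MeasurableSet E)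
    (hprep : ∀ s, ∀ᵐ ω ∂P s, prep s ω ∈ E) (x : S) :
    ∀ᵐ ω ∂P x, ∀ N, (fun n => ω (n + N)) ∈ E := by
  rw [ae_all_iff]
  intro N
  induction N generalizing x with
  | zero => exact hP.ae_mem_of_forall_ae_prep_mem hE hprep x
  | succ N ih => exact hP.ae_mem_of_forall_ae_prep_mem (measurable_tail (N + 1) hE) ih x

end IsTraceKernel

end Trace

section Drift

variable {α : Type*}

/-- The cost `c` accumulated along a trace during its first `n` steps, stopped at the first exit
from `A`. The recursion peels off the initial state, matching the one-step unfolding of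
`IsTraceKernel`. -/
noncomputable def costUntilExit (A : Set α) (c : α → ℝ≥0∞) : ℕ → (ℕ → α) → ℝ≥0∞
  | 0, _ => 0
  | n + 1, ω => A.indicator (fun s => c s + costUntilExit A c n fun k => ω (k + 1)) (ω 0)

lemma monotone_costUntilExit (A : Set α) (c : α → ℝ≥0∞) : Monotone (costUntilExit A c) := by
  refine monotone_nat_of_le_succ fun n => ?_
  induction n with
  | zero => exact fun ω => zero_le
  | succ n ih => exact fun ω => indicator_le_indicator (add_le_add_right (ih _) _)

lemma costUntilExit_eq_sum {A : Set α} {c : α → ℝ≥0∞} {ω : ℕ → α} (hω : ∀ k, ω k ∈ A) (n : ℕ) :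
    costUntilExit A c n ω = ∑ k ∈ Finset.range n, c (ω k) := by
  induction n generalizing ω with
  | zero => rfl
  | succ n ih =>
    rw [costUntilExit, indicator_of_mem (hω 0), ih fun k => hω (k + 1), Finset.sum_range_succ',
      add_comm]

variable {A : Set S} {c : S → ℝ≥0∞}

lemma measurable_costUntilExit (hA : MeasurableSet A) (hc : Measurable c) (n : ℕ) :
    Measurable (costUntilExit A c n) := by
  induction n with
  | zero => exact measurable_const
  | succ n ih =>
    exact ((hc.comp (measurable_pi_apply 0)).add (ih.comp (measurable_tail 1))).indicator
      (measurable_pi_apply 0 hA)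

variable {F : Kernel S S} {P : Kernel S (ℕ → S)} [IsMarkovKernel P] {f : S → ℝ≥0∞}

lemma IsTraceKernel.lintegral_costUntilExit_le (hP : IsTraceKernel F P) (hA : MeasurableSet A)
    (hc : Measurable c) (hdrift : ∀ s ∈ A, c s + ∫⁻ y, f y ∂F s ≤ f s) (n : ℕ) (s : S) :
    ∫⁻ ω, costUntilExit A c n (prep s ω) ∂P s ≤ f s := by
  induction n generalizing s with
  | zero => simp [costUntilExit]
  | succ n ih =>
    change ∫⁻ ω, A.indicator (fun t => c t + costUntilExit A c n ω) s ∂P s ≤ f s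
    by_cases hs : s ∈ A
    · simp only [indicator_of_mem hs]
      calc ∫⁻ ω, c s + costUntilExit A c n ω ∂P s
        _ = c s + ∫⁻ y, ∫⁻ ω, costUntilExit A c n (prep y ω) ∂P y ∂F s := by
          rw [lintegral_add_left measurable_const, lintegral_const, measure_univ, mul_one,
            hP.lintegral_eq (measurable_costUntilExit hA hc n)]
        _ ≤ c s + ∫⁻ y, f y ∂F s := by gcongr with y; exact ih y
        _ ≤ f s := hdrift s hs
    · simp [indicator_of_notMem hs]

lemma IsTraceKernel.ae_iSup_costUntilExit_lt_top (hP : IsTraceKernel F P) (hA : MeasurableSet A)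
    (hc : Measurable c) (hdrift : ∀ s ∈ A, c s + ∫⁻ y, f y ∂F s ≤ f s) {s : S} (hfs : f s ≠ ⊤) :
    ∀ᵐ ω ∂P s, ⨆ n, costUntilExit A c n (prep s ω) < ⊤ := by
  have hmeas (n : ℕ) : Measurable fun ω => costUntilExit A c n (prep s ω) :=
    (measurable_costUntilExit hA hc n).comp (measurable_prep s)
  refine ae_lt_top (Measurable.iSup hmeas) (ne_top_of_le_ne_top hfs ?_)
  rw [lintegral_iSup hmeas fun m n hmn ω => monotone_costUntilExit A c hmn _]
  exact iSup_le fun n => hP.lintegral_costUntilExit_le hA hc hdrift n s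

theorem IsTraceKernel.ae_tsum_tail_lt_top (hP : IsTraceKernel F P) (hA : MeasurableSet A)
    (hc : Measurable c) (hdrift : ∀ s ∈ A, c s + ∫⁻ y, f y ∂F s ≤ f s) (hf : ∀ s, f s ≠ ⊤)
    (x : S) :
    ∀ᵐ ω ∂P x, ∀ N, (∀ n, ω (n + N) ∈ A) → ∑' n, c (ω (n + N)) < ⊤ := by
  have hE : MeasurableSet {ω | ⨆ n, costUntilExit A c n ω < ⊤} :=
    measurableSet_lt (Measurable.iSup (measurable_costUntilExit hA hc)) measurable_const
  filter_upwards [hP.ae_forall_tail_mem hE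
    (fun s => hP.ae_iSup_costUntilExit_lt_top hA hc hdrift (hf s)) x] with ω hω N hN
  simpa only [mem_ofPred_eq, costUntilExit_eq_sum hN, ← ENNReal.tsum_eq_iSup_nat] using hω N

theorem IsTraceKernel.ae_tendsto_drift_zero (hP : IsTraceKernel F P) (hfm : Measurable f)
    (hf : ∀ s, f s ≠ ⊤) (x : S) :
    ∀ᵐ ω ∂P x, (∀ᶠ n in atTop, ∫⁻ y, f y ∂F (ω n) ≤ f (ω n)) →
      Tendsto (fun n => f (ω n) - ∫⁻ y, f y ∂F (ω n)) atTop (𝓝 0) := by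
  have hXf : Measurable fun s => ∫⁻ y, f y ∂F s := hfm.lintegral_kernel
  filter_upwards [hP.ae_tsum_tail_lt_top (measurableSet_le hXf hfm) (hfm.sub hXf)
    (fun s hs => (tsub_add_cancel_of_le hs).le) hf x] with ω hω hdecr
  obtain ⟨N, hN⟩ := eventually_atTop.1 hdecr
  have hsum := hω N fun n => hN (n + N) (Nat.le_add_left N n)
  exact (tendsto_add_atTop_iff_nat N).1 (ENNReal.tendsto_atTop_zero_of_tsum_ne_top hsum.ne)

theorem IsTraceKernel.ae_eventually_not_unit_decrease (hP : IsTraceKernel F P)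
    (hfm : Measurable f) (hf : ∀ s, f s ≠ ⊤) (x : S) :
    ∀ᵐ ω ∂P x, (∀ᶠ n in atTop, ∫⁻ y, f y ∂F (ω n) ≤ f (ω n)) →
      ∀ᶠ n in atTop, ¬ ∫⁻ y, f y ∂F (ω n) + 1 ≤ f (ω n) := by
  filter_upwards [hP.ae_tendsto_drift_zero hfm hf x] with ω hω hdecr
  filter_upwards [hdecr, (hω hdecr).eventually_lt_const one_pos] with n hn hlt hunit
  exact hlt.not_ge (ENNReal.le_sub_of_add_le_left (ne_top_of_le_ne_top (hf _) hn) hunit)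

end Drift

section Lexicographic

variable {d : ℕ}

lemma lexGETrunc.mono {j k : ℕ} (hjk : j ≤ k) {r r' : Fin d → ℝ≥0∞} (h : lexGETrunc k r r') :
    lexGETrunc j r r' := by
  rcases h with ⟨l, -, hbelow, hl⟩ | hle
  · rcases lt_or_ge (l : ℕ) j with hlj | hjl
    · exact Or.inl ⟨l, hlj, hbelow, hl⟩
    · exact Or.inr fun i hi => hbelow i (Fin.lt_def.2 (hi.trans_le hjl))
  · exact Or.inr fun i hi => hle i (hi.trans_le hjk)

lemma lexGETrunc.apply_le {k : ℕ} {r r' : Fin d → ℝ≥0∞} (h : lexGETrunc k r r') {l : Fin d}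
    (hlk : (l : ℕ) < k) (hbelow : ∀ i < l, ¬ r' i + 1 ≤ r i) : r' l ≤ r l := by
  rcases h with ⟨m, -, hm, hunit⟩ | hle
  · rcases lt_trichotomy m l with hml | rfl | hlm
    · exact absurd hunit (hbelow m hml)
    · exact le_self_add.trans hunit
    · exact hm l hlm
  · exact hle l hlk

theorem eventually_not_lexGTTrunc {α : Type*} {𝓕 : Filter α} {r r' : α → Fin d → ℝ≥0∞} {k : ℕ}
    (hrank : ∀ l, (∀ᶠ a in 𝓕, r' a l ≤ r a l) → ∀ᶠ a in 𝓕, ¬ r' a l + 1 ≤ r a l)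
    (hge : ∀ᶠ a in 𝓕, lexGETrunc k (r a) (r' a)) :
    ∀ᶠ a in 𝓕, ¬ lexGTTrunc k (r a) (r' a) := by
  have hunit (l : Fin d) : (l : ℕ) < k → ∀ᶠ a in 𝓕, ¬ r' a l + 1 ≤ r a l := by
    induction l using WellFoundedLT.induction with
    | ind l ih =>
      intro hlk
      have hbelow : ∀ᶠ a in 𝓕, ∀ i < l, ¬ r' a i + 1 ≤ r a i :=
        eventually_all.2 fun i => eventually_imp_distrib_left.2 fun hil =>
          ih i hil ((Fin.lt_def.1 hil).trans hlk)
      apply hrank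
      filter_upwards [hge, hbelow] with a ha hbelow_a using ha.apply_le hlk hbelow_a
  have hall : ∀ᶠ a in 𝓕, ∀ l : Fin d, (l : ℕ) < k → ¬ r' a l + 1 ≤ r a l :=
    eventually_all.2 fun l => eventually_imp_distrib_left.2 (hunit l)
  filter_upwards [hall] with a ha
  rintro ⟨l, hlk, -, hl⟩
  exact ha l hlk hl

end Lexicographic

section Parity

variable {α : Type*} {𝓕 : Filter α} {u : α → ℕ}

lemma eventually_sInf_frequently_le :
    ∀ᶠ a in 𝓕, sInf {q | ∃ᶠ b in 𝓕, u b = q} ≤ u a := by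
  have hne : ∀ᶠ a in 𝓕, ∀ q ∈ Iio (sInf {q | ∃ᶠ b in 𝓕, u b = q}), u a ≠ q :=
    (eventually_all_finite (finite_Iio _)).2 fun q hq =>
      not_frequently.1 (Nat.notMem_of_lt_sInf hq)
  filter_upwards [hne] with a ha
  exact not_lt.1 fun hlt => ha (u a) hlt rfl

lemma frequently_eq_sInf_frequently [NeBot 𝓕] (hu : BddAbove (range u)) :
    ∃ᶠ a in 𝓕, u a = sInf {q | ∃ᶠ b in 𝓕, u b = q} := by
  suffices hne : {q | ∃ᶠ b in 𝓕, u b = q}.Nonempty from Nat.sInf_mem hne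
  by_contra hempty
  have hrange : ∀ᶠ a in 𝓕, ∀ q ∈ range u, u a ≠ q :=
    (eventually_all_finite hu.finite).2 fun q _ => not_frequently.1 fun hq => hempty ⟨q, hq⟩
  obtain ⟨a, ha⟩ := hrange.exists
  exact ha (u a) (mem_range_self a) rfl

lemma mem_parityEventIn_iff {p : α → ℕ} {I : Set ℕ} {ω : ℕ → α} :
    ω ∈ parityEventIn p I ↔ sInf {q | ∃ᶠ n in atTop, p (ω n) = q} ∈ I := by
  simp only [parityEventIn, mem_ofPred_eq, Nat.frequently_atTop_iff_infinite]

end Parity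

theorem PMSM_implies_generalised_parity_as_general
    {F : Kernel S S} {P : Kernel S (ℕ → S)} [IsMarkovKernel P] (hP : IsTraceKernel F P)
    {d : ℕ} {p : S → ℕ} (hp : BddAbove (range p)) {I : Set ℕ} {r : S → Fin d → ℝ≥0∞}
    (hrm : ∀ i, Measurable fun x => r x i) (hrfin : ∀ x i, r x i ≠ ⊤)
    (hin : ∀ x, p x ∈ I → lexGETrunc (p x) (r x) (nextTimeV F r x))
    (hout : ∀ x, p x ∉ I → lexGTTrunc (p x) (r x) (nextTimeV F r x)) (x₀ : S) :
    ∀ᵐ ω ∂P x₀, ω ∈ parityEventIn p I := by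
  have hge (x : S) : lexGETrunc (p x) (r x) (nextTimeV F r x) :=
    (em (p x ∈ I)).elim (hin x) fun hx => Or.inl (hout x hx)
  filter_upwards [ae_all_iff.2 fun l =>
    hP.ae_eventually_not_unit_decrease (hrm l) (hrfin · l) x₀] with ω hrank
  rw [mem_parityEventIn_iff]
  set q := sInf {q | ∃ᶠ n in atTop, p (ω n) = q}
  have hqge : ∀ᶠ n in atTop, lexGETrunc q (r (ω n)) (nextTimeV F r (ω n)) :=
    eventually_sInf_frequently_le.mono fun n hn => (hge (ω n)).mono hn
  have hqfreq : ∃ᶠ n in atTop, p (ω n) = q :=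
    frequently_eq_sInf_frequently (hp.mono (range_comp_subset_range ω p))
  obtain ⟨n, hnq, hnot⟩ := (hqfreq.and_eventually (eventually_not_lexGTTrunc hrank hqge)).exists
  by_contra hqI
  exact hnot (hnq ▸ hout (ω n) (hnq ▸ hqI))

/-- Soundness of progress-measure supermartingales for the generalised parity
condition `(p, I)`: if a measurable `r : S → [0,∞)^d` satisfies
`r(x) ⪰_{p(x)} (𝕏 r)(x)` whenever `p(x) ∈ I` and `r(x) ≻_{p(x)} (𝕏 r)(x)`
whenever `p(x) ∉ I`, then `ℙ_{x₀}[Parity(p, I)] = 1` for every initial state. -/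
theorem PMSM_implies_generalised_parity_as
    (F : Kernel S S) [IsMarkovKernel F]
    (P : Kernel S (ℕ → S)) [IsMarkovKernel P]
    (hP : ∀ s₀ : S, (P s₀ : Measure (ℕ → S)) = (F s₀).bind fun s₁ => (P s₁).map (prep s₁))
    (d : ℕ) (p : S → ℕ) (hpm : Measurable p) (hp : ∀ x, 1 ≤ p x ∧ p x ≤ d)
    (I : Set ℕ) (hI : ∀ q ∈ I, 1 ≤ q ∧ q ≤ d)
    (r : S → Fin d → ℝ≥0∞)
    (hrm : ∀ i, Measurable fun x => r x i) (hrfin : ∀ x i, r x i ≠ ⊤)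
    (hin : ∀ x, p x ∈ I → lexGETrunc (p x) (r x) (nextTimeV F r x))
    (hout : ∀ x, p x ∉ I → lexGTTrunc (p x) (r x) (nextTimeV F r x)) :
    ∀ x₀ : S, P x₀ (parityEventIn p I) = 1 := by
  intro x₀
  have hbdd : BddAbove (range p) := ⟨d, forall_mem_range.2 fun x => (hp x).2⟩
  have hae := PMSM_implies_generalised_parity_as_general hP hbdd hrm hrfin hin hout x₀
  exact (measure_congr (eventuallyEq_univ.2 hae)).trans measure_univ
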